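/- arXiv:0709.2429 — 2 statements merged into one kernel-verified Lean document; each statement's English description precedes it below -/
import Mathlib

section
/- Let G = (Spin(n) × ℂ×)/K with K = {(1,1),(−1,−1)}, p : G → SO(n) the map [A,c] ↦ Ad_A, and ε : G → End(ℂᵏ) the restriction of an irreducible representation ρ of the complex Clifford algebra Cₙ^c (k = 2^⌊n/2⌋). If G' is a group with homomorphism p' : G' → SO(n) and representation ε' : G' → GL(ℂᵏ) satisfying ρ(p'(g)y) = ε'(g)∘ρ(y)∘ε'(g)⁻¹ for all y and g, then there exists a unique group homomorphism f : G' → G with p' = p ∘ f and ε' = ε ∘ f. -/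
open CliffordAlgebra

/-- The negative definite quadratic form `-⟨x,x⟩` on `ℝⁿ`, so that
`CliffordAlgebra (negEuclideanForm n)` is the Clifford algebra `Cₙ = Cl(ℝⁿ, -⟨,⟩)`. -/
noncomputable def negEuclideanForm (n : ℕ) : QuadraticForm ℝ (Fin n → ℝ) :=
  -(QuadraticMap.weightedSumSquares ℝ (fun _ : Fin n => (1 : ℝ)))

/-- The complexified Clifford algebra `Cₙᶜ = Cₙ ⊗ ℂ`. -/
abbrev ComplexClifford (n : ℕ) : Type :=
  TensorProduct ℝ ℂ (CliffordAlgebra (negEuclideanForm n))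

/-- The natural inclusion `Cₙ → Cₙᶜ`. -/
noncomputable def inclC (n : ℕ) :
    CliffordAlgebra (negEuclideanForm n) →ₐ[ℝ] ComplexClifford n :=
  Algebra.TensorProduct.includeRight

/-- The special orthogonal group `SO(n)`, as the subgroup of orthogonal `n × n` real
matrices of determinant `1`. -/
def SOGroup (n : ℕ) : Subgroup (Matrix.unitaryGroup (Fin n) ℝ) :=
  MonoidHom.ker (Matrix.detMonoidHom.comp (Submonoid.subtype _))

/-- The underlying matrix of an element of `SO(n)`. -/
def SOGroup.matrix {n : ℕ} (B : SOGroup n) : Matrix (Fin n) (Fin n) ℝ :=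
  ((B : Matrix.unitaryGroup (Fin n) ℝ) : Matrix (Fin n) (Fin n) ℝ)

/-- The group `G = (Spin(n) × ℂ×)/K`, where `K` is the two-element subgroup generated
by `(-1, -1)`; here `m ∈ Spin(n)` is the element whose image in the Clifford algebra
is `-1` (it is central, so the subgroup it generates with `-1 ∈ ℂ×` is normal). -/
abbrev SpinC (n : ℕ) (m : spinGroup (negEuclideanForm n)) :=
  (spinGroup (negEuclideanForm n) × ℂˣ) ⧸ Subgroup.normalClosure {(m, (-1 : ℂˣ))}

/-!
The map `f` exists and is unique as soon as `(p, ε)` is injective on `G` with range containing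
every pair `(p' g, ε' g)`.

*Injectivity.* If `Ad_A = id`, then `A` is even and commutes with every vector `v`. Since
`v x - involute x v` is the contraction of `x` by the polar form at `v`, all contractions of `A`
vanish, so `A` is a scalar, and `A A* = 1` leaves `A = ±1`.

*Range.* An orthogonal map is a product of hyperplane reflections, each of which is the twisted
adjoint action of a unit vector, so `Spin(n) → SO(n)` is onto. If `Ad_A = p' g`, then
`ρ A` and `ε' g` conjugate the generators `ρ v` in the same way, so they differ by a scalar
according to Schur's lemma.
-/

open Module

section Contraction

variable {R M N : Type*} [CommRing R] [AddCommGroup M] [Module R M] [AddCommGroup N] [Module R N]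

theorem exteriorAlgebra_map_add_smulRight (f : M →ₗ[R] N) (d : Dual R M) (v : N)
    (x : ExteriorAlgebra R M) :
    ExteriorAlgebra.map (f + d.smulRight v) x = ExteriorAlgebra.map f x +
      ExteriorAlgebra.ι R v * ExteriorAlgebra.map f (contractLeft (Q := 0) d x) := by
  induction x using CliffordAlgebra.left_induction with
  | algebraMap r => simp [contractLeft_algebraMap]
  | add x y hx hy => simp only [map_add, hx, hy, mul_add]; abel
  | ι_mul x m hx =>
    have hm (g : M →ₗ[R] N) : ExteriorAlgebra.map g (ι 0 m) = ExteriorAlgebra.ι R (g m) :=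
      ExteriorAlgebra.map_apply_ι g m
    have hanti : ExteriorAlgebra.ι R (f m) * ExteriorAlgebra.ι R v =
        -(ExteriorAlgebra.ι R v * ExteriorAlgebra.ι R (f m)) :=
      eq_neg_of_add_eq_zero_left (ExteriorAlgebra.ι_add_mul_swap (f m) v)
    rw [map_mul, map_mul, hx, contractLeft_ι_mul, map_sub, map_mul, map_smul, hm, hm,
      LinearMap.add_apply, LinearMap.smulRight_apply, map_add, map_smul]
    simp only [add_mul, mul_add, mul_sub, ← mul_assoc, smul_mul_assoc, mul_smul_comm, hanti,
      ExteriorAlgebra.ι_sq_zero, zero_mul, smul_zero]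
    noncomm_ring

theorem exteriorAlgebra_map_zero (x : ExteriorAlgebra R M) :
    ExteriorAlgebra.map (0 : M →ₗ[R] N) x = algebraMap R _ (ExteriorAlgebra.algebraMapInv x) := by
  have hmap : ExteriorAlgebra.map (0 : M →ₗ[R] N) =
      (Algebra.ofId R _).comp ExteriorAlgebra.algebraMapInv := by
    ext m
    simp [ExteriorAlgebra.algebraMapInv]
  exact DFunLike.congr_fun hmap x

-- The identity is a sum of rank-one maps, and adding a rank-one map does not change `map f x`.
theorem exteriorAlgebra_eq_algebraMap_of_contractLeft_eq_zero [Free R M] [Module.Finite R M]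
    {x : ExteriorAlgebra R M} (hx : ∀ d : Dual R M, contractLeft (Q := 0) d x = 0) :
    x = algebraMap R _ (ExteriorAlgebra.algebraMapInv x) := by
  let b := Free.chooseBasis R M
  have hmap (s : Finset (Free.ChooseBasisIndex R M)) :
      ExteriorAlgebra.map (∑ i ∈ s, (b.coord i).smulRight (b i)) x =
        ExteriorAlgebra.map (0 : M →ₗ[R] M) x := by
    classical
    induction s using Finset.induction_on with
    | empty => rw [Finset.sum_empty]
    | insert i s hi ih =>
      rw [Finset.sum_insert hi, add_comm, exteriorAlgebra_map_add_smulRight, hx, map_zero, mul_zero,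
        add_zero, ih]
  have hid : ∑ i, (b.coord i).smulRight (b i) = LinearMap.id :=
    LinearMap.ext fun v ↦ by simp [b.sum_repr]
  rw [← exteriorAlgebra_map_zero, ← hmap Finset.univ, hid, ExteriorAlgebra.map_id, AlgHom.id_apply]

variable (Q : QuadraticForm R M)

theorem ι_mul_sub_involute_mul_ι (v : M) (x : CliffordAlgebra Q) :
    ι Q v * x - involute x * ι Q v = contractLeft (Q.polarBilin v) x := by
  induction x using CliffordAlgebra.left_induction with
  | algebraMap r => rw [AlgHom.commutes, contractLeft_algebraMap, Algebra.commutes, sub_self]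
  | add x y hx hy => rw [map_add, map_add, ← hx, ← hy]; noncomm_ring
  | ι_mul y w hy =>
    rw [contractLeft_ι_mul, ← hy, map_mul, involute_ι, QuadraticMap.polarBilin_apply_apply,
      Algebra.smul_def, ← ι_mul_ι_add_swap]
    noncomm_ring

variable [Invertible (2 : R)]

theorem cliffordAlgebra_algebraMap_injective :
    Function.Injective (algebraMap R (CliffordAlgebra Q)) := fun r s h ↦ by
  have heq := congrArg (changeForm changeForm.associated_neg_proof) h
  rw [changeForm_algebraMap, changeForm_algebraMap] at heq
  exact (ExteriorAlgebra.algebraMap_leftInverse M).injective heq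

theorem cliffordAlgebra_ι_injective : Function.Injective (ι Q) := fun v w h ↦ by
  have heq := congrArg (changeForm changeForm.associated_neg_proof) h
  rw [changeForm_ι, changeForm_ι] at heq
  exact ExteriorAlgebra.ι_leftInverse.injective heq

variable {Q} [Free R M] [Module.Finite R M]

theorem exists_eq_algebraMap_of_contractLeft_eq_zero {x : CliffordAlgebra Q}
    (hx : ∀ d : Dual R M, contractLeft d x = 0) : ∃ r, x = algebraMap R _ r := by
  have hneg := changeForm.associated_neg_proof (Q := Q)
  have hy (d : Dual R M) : contractLeft (Q := 0) d (equivExterior Q x) = 0 :=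
    (changeForm_contractLeft hneg d x).symm.trans (by rw [hx, map_zero])
  refine ⟨ExteriorAlgebra.algebraMapInv (equivExterior Q x), (equivExterior Q).injective ?_⟩
  exact (exteriorAlgebra_eq_algebraMap_of_contractLeft_eq_zero hy).trans
    (changeForm_algebraMap hneg _).symm

theorem exists_eq_algebraMap_of_commute_ι (hQ : Function.Surjective Q.polarBilin)
    {x : CliffordAlgebra Q} (heven : involute x = x) (hcomm : ∀ v, Commute (ι Q v) x) :
    ∃ r, x = algebraMap R _ r := by
  refine exists_eq_algebraMap_of_contractLeft_eq_zero fun d ↦ ?_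
  obtain ⟨v, rfl⟩ := hQ d
  rw [← ι_mul_sub_involute_mul_ι, heven, (hcomm v).eq, sub_self]

theorem spinGroup_eq_one_or_coe_eq_neg_one_of_conj_ι_eq [NoZeroDivisors R]
    (hQ : Function.Surjective Q.polarBilin) {A : spinGroup Q}
    (hA : ∀ v, (A : CliffordAlgebra Q) * ι Q v * (A⁻¹ : spinGroup Q) = ι Q v) :
    A = 1 ∨ (A : CliffordAlgebra Q) = -1 := by
  have hcomm (v : M) : Commute (ι Q v) (A : CliffordAlgebra Q) :=
    ((Units.mul_inv_eq_iff_eq_mul (spinGroup.toUnits A)).mp (hA v)).symm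
  obtain ⟨r, hr⟩ := exists_eq_algebraMap_of_commute_ι hQ (spinGroup.involute_eq A.2) hcomm
  have hrr : r * r = 1 := cliffordAlgebra_algebraMap_injective Q <| by
    have hstar := spinGroup.coe_mul_star_self A
    rwa [spinGroup.coe_star, hr, star_algebraMap, ← map_mul, ← map_one (algebraMap R _)] at hstar
  rcases mul_self_eq_one_iff.mp hrr with rfl | rfl
  · exact .inl (Subtype.ext (by rw [hr, map_one]; rfl))
  · exact .inr (by rw [hr, map_neg, map_one])

end Contraction

theorem polarBilin_surjective_of_anisotropic {K V : Type*} [Field K] [Invertible (2 : K)]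
    [AddCommGroup V] [Module K V] [FiniteDimensional K V] {Q : QuadraticForm K V}
    (hQ : Q.Anisotropic) : Function.Surjective Q.polarBilin := by
  refine (LinearMap.injective_iff_surjective_of_finrank_eq_finrank
    Subspace.dual_finrank_eq.symm).mp ((injective_iff_map_eq_zero _).mpr fun v hv ↦ hQ v ?_)
  have htwo : 2 • Q v = 0 := by
    rw [← QuadraticMap.polar_self, ← QuadraticMap.polarBilin_apply_apply, hv, LinearMap.zero_apply]
  simpa [(isUnit_of_invertible (2 : K)).ne_zero] using htwo

theorem ι_mem_pinGroup {R M : Type*} [CommRing R] [AddCommGroup M] [Module R M]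
    {Q : QuadraticForm R M} {v : M} (hv : Q v = -1) : ι Q v ∈ pinGroup Q := by
  have hsq : ι Q v * ι Q v = -1 := by rw [ι_sq_scalar, hv, map_neg, map_one]
  have hleft : star (ι Q v) * ι Q v = 1 := by rw [star_ι, neg_mul, hsq, neg_neg]
  have hright : ι Q v * star (ι Q v) = 1 := by rw [star_ι, mul_neg, hsq, neg_neg]
  exact ⟨⟨⟨ι Q v, star (ι Q v), hright, hleft⟩, Subgroup.subset_closure ⟨v, rfl⟩, rfl⟩,
    hleft, hright⟩

section PinLift

variable {E M : Type*} [NormedAddCommGroup E] [InnerProductSpace ℝ E] [AddCommGroup M] [Module ℝ M]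
  {Q : QuadraticForm ℝ M}

/-- `A` is a lift to the pin group of the linear isometry `φ`, which is a product of `k`
hyperplane reflections up to parity. The linear map `e` embeds the inner product space `E` in the
quadratic space `(M, Q)`. The twisted adjoint action `v ↦ involute A * v * A⁻¹` is used because it
sends a unit vector to the reflection in its orthogonal complement without a sign. -/
structure IsPinLift (e : E →ₗ[ℝ] M) (k : ℕ) (A : CliffordAlgebra Q) (φ : E ≃ₗᵢ[ℝ] E) : Prop where
  mem_pinGroup : A ∈ pinGroup Q
  mem_evenOdd : A ∈ evenOdd Q (k : ZMod 2)
  det_eq : LinearMap.det (φ.toLinearEquiv : E →ₗ[ℝ] E) = (-1) ^ k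
  twisted_conj_ι : ∀ v, involute A * ι Q (e v) * star A = ι Q (e (φ v))

namespace IsPinLift

theorem one (e : E →ₗ[ℝ] M) : IsPinLift (Q := Q) e 0 1 1 where
  mem_pinGroup := one_mem _
  mem_evenOdd := by exact_mod_cast SetLike.one_mem_graded (evenOdd Q)
  det_eq := LinearMap.det_id.trans (pow_zero _).symm
  twisted_conj_ι v := by rw [map_one, star_one, one_mul, mul_one]; rfl

variable {e : E →ₗ[ℝ] M}

theorem mul {k l : ℕ} {A B : CliffordAlgebra Q} {φ ψ : E ≃ₗᵢ[ℝ] E}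
    (hA : IsPinLift e k A φ) (hB : IsPinLift e l B ψ) : IsPinLift e (k + l) (A * B) (φ * ψ) where
  mem_pinGroup := mul_mem hA.mem_pinGroup hB.mem_pinGroup
  mem_evenOdd := by
    rw [Nat.cast_add]
    exact SetLike.mul_mem_graded hA.mem_evenOdd hB.mem_evenOdd
  det_eq := by
    rw [pow_add, ← hA.det_eq, ← hB.det_eq, ← LinearMap.det_comp]
    rfl
  twisted_conj_ι v := calc
    _ = involute A * (involute B * ι Q (e v) * star B) * star A := by
      rw [map_mul, star_mul]; noncomm_ring
    _ = _ := by rw [hB.twisted_conj_ι, hA.twisted_conj_ι]; rfl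

end IsPinLift

variable {e : E →ₗ[ℝ] M} (he : ∀ x, Q (e x) = -‖x‖ ^ 2)
include he

theorem ι_mul_ι_mul_ι_of_norm_eq_one {u : E} (hu : ‖u‖ = 1) (v : E) :
    ι Q (e u) * ι Q (e v) * ι Q (e u) = ι Q (e (v - 2 • inner ℝ u v • u)) := by
  have hsq : ι Q (e u) * ι Q (e u) = -1 := by simp [ι_sq_scalar, he, hu]
  have hpolar : QuadraticMap.polar Q (e v) (e u) = -(2 * inner ℝ u v) := by
    rw [QuadraticMap.polar, ← map_add, he, he, he, norm_add_sq_real, real_inner_comm]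
    ring
  rw [mul_assoc, ι_mul_ι_comm, hpolar, mul_sub, ← mul_assoc, hsq, neg_one_mul, ← Algebra.commutes,
    ← Algebra.smul_def]
  simp only [map_sub, map_nsmul, map_smul]
  module

variable [FiniteDimensional ℝ E]

namespace IsPinLift

theorem reflection_of_norm_eq_one {u : E} (hu : ‖u‖ = 1) :
    IsPinLift e 1 (ι Q (e u)) (Submodule.reflection (ℝ ∙ u)ᗮ) where
  mem_pinGroup := ι_mem_pinGroup (by rw [he, hu, one_pow])
  mem_evenOdd := by
    rw [Nat.cast_one]
    exact ι_mem_evenOdd_one Q (e u)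
  det_eq := by
    have hu0 : u ≠ 0 := norm_ne_zero_iff.mp (hu ▸ one_ne_zero)
    have hdet := Submodule.det_reflection (ℝ ∙ u)ᗮ
    rwa [Submodule.orthogonal_orthogonal, finrank_span_singleton hu0] at hdet
  twisted_conj_ι v := by
    rw [involute_ι, star_ι, neg_mul, neg_mul_neg, ι_mul_ι_mul_ι_of_norm_eq_one he hu,
      Submodule.reflection_orthogonal_apply, Submodule.reflection_singleton_apply, hu]
    simp

theorem exists_reflection (w : E) :
    ∃ k A, IsPinLift (Q := Q) e k A (Submodule.reflection (ℝ ∙ w)ᗮ) := by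
  rcases eq_or_ne w 0 with rfl | hw
  · have hrefl : Submodule.reflection (ℝ ∙ (0 : E))ᗮ = 1 := by
      ext v
      rw [Submodule.reflection_orthogonal_apply, Submodule.reflection_singleton_apply]
      simp
    exact ⟨0, 1, hrefl ▸ one e⟩
  · have hspan : ℝ ∙ (‖w‖⁻¹ • w) = ℝ ∙ w :=
      Submodule.span_singleton_smul_eq (inv_ne_zero (norm_ne_zero_iff.mpr hw)).isUnit w
    have hnorm : ‖‖w‖⁻¹ • w‖ = 1 := norm_smul_inv_norm hw
    exact ⟨1, ι Q (e (‖w‖⁻¹ • w)), by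
      simpa only [hspan] using reflection_of_norm_eq_one he hnorm⟩

theorem exists_of_linearIsometryEquiv (φ : E ≃ₗᵢ[ℝ] E) : ∃ k A, IsPinLift (Q := Q) e k A φ := by
  obtain ⟨l, -, rfl⟩ := φ.reflections_generate_dim
  induction l with
  | nil => exact ⟨0, 1, one e⟩
  | cons w l ih =>
    obtain ⟨k, A, hA⟩ := exists_reflection he w
    obtain ⟨j, B, hB⟩ := ih
    exact ⟨k + j, A * B, by simpa only [List.map_cons, List.prod_cons] using hA.mul hB⟩

end IsPinLift

theorem exists_spinGroup_ι_apply_eq_conj {φ : E ≃ₗᵢ[ℝ] E}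
    (hφ : LinearMap.det (φ.toLinearEquiv : E →ₗ[ℝ] E) = 1) :
    ∃ A : spinGroup Q, ∀ v,
      ι Q (e (φ v)) = (A : CliffordAlgebra Q) * ι Q (e v) * (A⁻¹ : spinGroup Q) := by
  obtain ⟨k, A, hA⟩ := IsPinLift.exists_of_linearIsometryEquiv he φ
  have hk : Even k :=
    (neg_one_pow_eq_one_iff_even (by norm_num)).mp (hA.det_eq.symm.trans hφ)
  have heven := hA.mem_evenOdd
  rw [(ZMod.natCast_eq_zero_iff_even).mpr hk] at heven
  have hspin : A ∈ spinGroup Q := ⟨hA.mem_pinGroup, heven⟩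
  refine ⟨⟨A, hspin⟩, fun v ↦ ?_⟩
  rw [← hA.twisted_conj_ι, spinGroup.involute_eq hspin]
  rfl

end PinLift

theorem commute_inv_mul_of_conj_eq {M : Type*} [Monoid M] {u w : Mˣ} {x : M}
    (h : (u : M) * x * (u⁻¹ : Mˣ) = w * x * (w⁻¹ : Mˣ)) : Commute ((u⁻¹ * w : Mˣ) : M) x := by
  have hw := (Units.eq_mul_inv_iff_mul_eq w).mp h
  rw [Commute, SemiconjBy, Units.val_mul, mul_assoc, ← hw]
  simp only [mul_assoc, Units.inv_mul_cancel_left]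

theorem exists_eq_algebraMap_of_irreducible_of_commute {K V κ : Type*} [Field K] [IsAlgClosed K]
    [AddCommGroup V] [Module K V] [FiniteDimensional K V] [Nontrivial V] {ρ : κ → End K V}
    (hirr : ∀ W : Submodule K V, (∀ a, ∀ w ∈ W, ρ a w ∈ W) → W = ⊥ ∨ W = ⊤)
    {T : End K V} (hT : ∀ a, Commute T (ρ a)) : ∃ c : K, T = algebraMap K _ c := by
  obtain ⟨c, hc⟩ := Module.End.exists_eigenvalue T
  have hinv (a : κ) : ∀ w ∈ T.eigenspace c, ρ a w ∈ T.eigenspace c :=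
    Module.End.mapsTo_genEigenspace_of_comm (hT a) c 1
  have htop : T.eigenspace c = ⊤ := (hirr _ hinv).resolve_left hc
  exact ⟨c, LinearMap.ext fun w ↦ Module.End.mem_eigenspace_iff.mp (htop ▸ Submodule.mem_top)⟩

theorem existsUnique_eq_comp_of_injective {M G H : Type*} [Monoid M] [Group G] [Group H]
    {F : G →* H} (hF : Function.Injective F) {g : M →* H} (hg : ∀ x, ∃ y, F y = g x) :
    ∃! f : M →* G, g = F.comp f := by
  let f := (MonoidHom.ofInjective hF).symm.toMonoidHom.comp (g.codRestrict F.range hg)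
  have hf : g = F.comp f :=
    MonoidHom.ext fun x ↦ (MonoidHom.apply_ofInjective_symm hF ⟨g x, hg x⟩).symm
  exact ⟨f, hf, fun f' hf' ↦ (MonoidHom.cancel_left hF).mp (hf'.symm.trans hf)⟩

section Euclidean

variable {n : ℕ}

theorem adjoin_range_inclC_ι (n : ℕ) :
    Algebra.adjoin ℂ (Set.range fun v ↦ inclC n (ι (negEuclideanForm n) v)) = ⊤ := by
  rw [← Algebra.TensorProduct.adjoin_one_tmul_image_eq_top _
    (adjoin_range_ι (Q := negEuclideanForm n)), ← Set.range_comp]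
  rfl

theorem commute_map_of_commute_map_inclC_ι {B : Type*} [Semiring B] [Algebra ℂ B]
    {ρ : ComplexClifford n →ₐ[ℂ] B} {b : B}
    (hb : ∀ v, Commute b (ρ (inclC n (ι (negEuclideanForm n) v)))) (a : ComplexClifford n) :
    Commute b (ρ a) := by
  have ha : a ∈ Algebra.adjoin ℂ (Set.range fun v ↦ inclC n (ι (negEuclideanForm n) v)) :=
    adjoin_range_inclC_ι n ▸ Algebra.mem_top
  have hρa : ρ a ∈ (Algebra.adjoin ℂ _).map ρ := Subalgebra.mem_map.mpr ⟨a, ha, rfl⟩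
  rw [AlgHom.map_adjoin, ← Set.range_comp] at hρa
  exact Algebra.commute_of_mem_adjoin_of_forall_mem_commute hρa (Set.forall_mem_range.mpr hb)

theorem negEuclideanForm_ofLp (x : EuclideanSpace ℝ (Fin n)) :
    negEuclideanForm n x.ofLp = -‖x‖ ^ 2 := by
  rw [EuclideanSpace.real_norm_sq_eq]
  simp [negEuclideanForm, QuadraticMap.weightedSumSquares_apply, sq]

theorem negEuclideanForm_anisotropic (n : ℕ) : (negEuclideanForm n).Anisotropic := fun x hx ↦ by
  have hnorm := negEuclideanForm_ofLp (WithLp.toLp 2 x)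
  rw [hx] at hnorm
  simpa using hnorm.symm

theorem SOGroup.ext_ι_mulVec {B C : SOGroup n}
    (h : ∀ v, ι (negEuclideanForm n) ((SOGroup.matrix B).mulVec v) =
      ι (negEuclideanForm n) ((SOGroup.matrix C).mulVec v)) : B = C :=
  Subtype.ext <| Subtype.ext <| Matrix.mulVec_injective <|
    funext fun v ↦ cliffordAlgebra_ι_injective _ (h v)

theorem SOGroup.exists_spinGroup_ι_mulVec_eq_conj (B : SOGroup n) :
    ∃ A : spinGroup (negEuclideanForm n), ∀ v,
      ι (negEuclideanForm n) ((SOGroup.matrix B).mulVec v) =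
        (A : CliffordAlgebra (negEuclideanForm n)) * ι (negEuclideanForm n) v *
          (A⁻¹ : spinGroup (negEuclideanForm n)) := by
  let T := Matrix.toEuclideanCLM (n := Fin n) (𝕜 := ℝ) (SOGroup.matrix B)
  let φ : EuclideanSpace ℝ (Fin n) ≃ₗᵢ[ℝ] EuclideanSpace ℝ (Fin n) :=
    Unitary.linearIsometryEquiv
      ⟨T, Unitary.map_mem (Matrix.toEuclideanCLM (n := Fin n) (𝕜 := ℝ)) B.1.2⟩
  have hdet : LinearMap.det (φ.toLinearEquiv : _ →ₗ[ℝ] EuclideanSpace ℝ (Fin n)) = 1 := calc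
    _ = LinearMap.det (Matrix.toEuclideanLin (SOGroup.matrix B)) := rfl
    _ = (SOGroup.matrix B).det := by
      rw [Matrix.toEuclideanLin_eq_toLin_orthonormal, LinearMap.det_toLin]
    _ = 1 := B.2
  obtain ⟨A, hA⟩ := exists_spinGroup_ι_apply_eq_conj (Q := negEuclideanForm n)
    (e := (WithLp.linearEquiv 2 ℝ (Fin n → ℝ)).toLinearMap) negEuclideanForm_ofLp hdet
  exact ⟨A, fun v ↦ hA (WithLp.toLp 2 v)⟩

end Euclidean

section SpinRepresentation

variable {n : ℕ} {V : Type*} [AddCommGroup V] [Module ℂ V] [Nontrivial V]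
  {ρ : ComplexClifford n →ₐ[ℂ] End ℂ V}

theorem mem_normalClosure_of_conj_ι_eq_of_smul_map_eq_one
    {m A : spinGroup (negEuclideanForm n)} {c : ℂˣ}
    (hm : (m : CliffordAlgebra (negEuclideanForm n)) = -1)
    (hA : ∀ v, (A : CliffordAlgebra (negEuclideanForm n)) * ι (negEuclideanForm n) v *
      (A⁻¹ : spinGroup (negEuclideanForm n)) = ι (negEuclideanForm n) v)
    (hc : (c : ℂ) • ρ (inclC n A) = 1) :
    (A, c) ∈ Subgroup.normalClosure {(m, (-1 : ℂˣ))} := by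
  have hsmul {b : ℂ} (hb : b • (1 : End ℂ V) = 1) : b = 1 :=
    smul_left_injective ℂ one_ne_zero (hb.trans (one_smul ℂ _).symm)
  rcases spinGroup_eq_one_or_coe_eq_neg_one_of_conj_ι_eq
    (polarBilin_surjective_of_anisotropic (negEuclideanForm_anisotropic n)) hA with rfl | hA
  · rw [OneMemClass.coe_one, map_one, map_one] at hc
    obtain rfl : c = 1 := Units.ext (hsmul hc)
    exact one_mem _
  · rw [hA, map_neg, map_one, map_neg, map_one, smul_neg, ← neg_smul] at hc
    obtain rfl : A = m := Subtype.ext (hA.trans hm.symm)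
    obtain rfl : c = -1 := Units.ext (neg_eq_iff_eq_neg.mp (hsmul hc))
    exact Subgroup.subset_normalClosure rfl

variable [FiniteDimensional ℂ V]
  (hirr : ∀ W : Submodule ℂ V, (∀ a, ∀ w ∈ W, ρ a w ∈ W) → W = ⊥ ∨ W = ⊤)
include hirr

theorem exists_smul_eq_of_conj_map_ι_eq {u w : (End ℂ V)ˣ}
    (h : ∀ v, u * ρ (inclC n (ι (negEuclideanForm n) v)) * (u⁻¹ : (End ℂ V)ˣ) =
      w * ρ (inclC n (ι (negEuclideanForm n) v)) * (w⁻¹ : (End ℂ V)ˣ)) :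
    ∃ c : ℂˣ, (c : ℂ) • (u : End ℂ V) = w := by
  obtain ⟨c, hc⟩ := exists_eq_algebraMap_of_irreducible_of_commute hirr
    (commute_map_of_commute_map_inclC_ι fun v ↦ commute_inv_mul_of_conj_eq (h v))
  have hw : c • (u : End ℂ V) = w := by
    rw [← mul_one (u : End ℂ V), ← mul_smul_comm, ← Algebra.algebraMap_eq_smul_one, ← hc,
      Units.val_mul, Units.mul_inv_cancel_left]
  have hc0 : c ≠ 0 := by
    rintro rfl
    exact w.ne_zero (by rw [← hw, zero_smul])
  exact ⟨Units.mk0 c hc0, hw⟩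

theorem exists_spinGroup_ι_mulVec_eq_conj_and_smul_map_eq {B : SOGroup n} {T : (End ℂ V)ˣ}
    (hBT : ∀ v, ρ (inclC n (ι (negEuclideanForm n) ((SOGroup.matrix B).mulVec v))) =
      T * ρ (inclC n (ι (negEuclideanForm n) v)) * (T⁻¹ : (End ℂ V)ˣ)) :
    ∃ (A : spinGroup (negEuclideanForm n)) (c : ℂˣ),
      (∀ v, ι (negEuclideanForm n) ((SOGroup.matrix B).mulVec v) =
        (A : CliffordAlgebra (negEuclideanForm n)) * ι (negEuclideanForm n) v *
          (A⁻¹ : spinGroup (negEuclideanForm n))) ∧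
      (c : ℂ) • ρ (inclC n A) = T := by
  obtain ⟨A, hA⟩ := SOGroup.exists_spinGroup_ι_mulVec_eq_conj B
  let u : (End ℂ V)ˣ :=
    Units.map (ρ.toMonoidHom.comp (inclC n).toMonoidHom) (spinGroup.toUnits A)
  obtain ⟨c, hc⟩ := exists_smul_eq_of_conj_map_ι_eq hirr (u := u) (w := T) fun v ↦ by
    rw [← hBT, hA, map_mul, map_mul, map_mul, map_mul]
    rfl
  exact ⟨A, c, hA, hc⟩

end SpinRepresentation

theorem stmt_12_general {n : ℕ} {V G' : Type*} [AddCommGroup V] [Module ℂ V]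
    [FiniteDimensional ℂ V] [Nontrivial V] [Monoid G'] {m : spinGroup (negEuclideanForm n)}
    (hm : (m : CliffordAlgebra (negEuclideanForm n)) = -1)
    {ρ : ComplexClifford n →ₐ[ℂ] End ℂ V}
    (hirr : ∀ W : Submodule ℂ V, (∀ a, ∀ w ∈ W, ρ a w ∈ W) → W = ⊥ ∨ W = ⊤)
    {p : SpinC n m →* SOGroup n}
    (hp : ∀ (A : spinGroup (negEuclideanForm n)) (c : ℂˣ) (v : Fin n → ℝ),
      ι (negEuclideanForm n) ((SOGroup.matrix (p (QuotientGroup.mk (A, c)))).mulVec v) =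
        (A : CliffordAlgebra (negEuclideanForm n)) * ι (negEuclideanForm n) v *
          (A⁻¹ : spinGroup (negEuclideanForm n)))
    {ε : SpinC n m →* (End ℂ V)ˣ}
    (hε : ∀ (A : spinGroup (negEuclideanForm n)) (c : ℂˣ),
      (ε (QuotientGroup.mk (A, c)) : End ℂ V) = (c : ℂ) • ρ (inclC n A))
    {p' : G' →* SOGroup n} {ε' : G' →* (End ℂ V)ˣ}
    (hequiv : ∀ g v, ρ (inclC n (ι (negEuclideanForm n) ((SOGroup.matrix (p' g)).mulVec v))) =
      ε' g * ρ (inclC n (ι (negEuclideanForm n) v)) * ((ε' g)⁻¹ : (End ℂ V)ˣ)) :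
    ∃! f : G' →* SpinC n m, p' = p.comp f ∧ ε' = ε.comp f := by
  have hinj : Function.Injective (p.prod ε) := by
    refine (injective_iff_map_eq_one _).mpr fun x hx ↦ ?_
    obtain ⟨⟨A, c⟩, rfl⟩ := QuotientGroup.mk_surjective x
    obtain ⟨hpA, hεA⟩ := Prod.mk_eq_one.mp hx
    refine (QuotientGroup.eq_one_iff _).mpr
      (mem_normalClosure_of_conj_ι_eq_of_smul_map_eq_one (ρ := ρ) hm (fun v ↦ ?_) ?_)
    · rw [← hp A c, hpA]
      exact congrArg _ (Matrix.one_mulVec v)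
    · rw [← hε, hεA, Units.val_one]
  have hlift (g : G') : ∃ x, p.prod ε x = p'.prod ε' g := by
    obtain ⟨A, c, hA, hc⟩ := exists_spinGroup_ι_mulVec_eq_conj_and_smul_map_eq hirr (hequiv g)
    exact ⟨QuotientGroup.mk (A, c), Prod.ext
      (SOGroup.ext_ι_mulVec fun v ↦ (hp A c v).trans (hA v).symm) (Units.ext ((hε A c).trans hc))⟩
  have hprod (f : G' →* SpinC n m) :
      p'.prod ε' = (p.prod ε).comp f ↔ p' = p.comp f ∧ ε' = ε.comp f := by
    simp only [MonoidHom.ext_iff, ← forall_and]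
    exact forall_congr' fun g ↦ Prod.ext_iff
  simpa only [hprod] using existsUnique_eq_comp_of_injective hinj hlift

/-- The universal property of `G = (Spin(n) × ℂ×)/K` (main theorem, part (2)): given
an irreducible representation `ρ` of the complexified Clifford algebra `Cₙᶜ` on `ℂᵏ`
(`k = 2^⌊n/2⌋`), with `p : G → SO(n)`, `[A,c] ↦ Ad_A`, and
`ε : G → End(ℂᵏ)`, `[A,c] ↦ c·ρ(A)`: any group `G'` with `p' : G' → SO(n)` and a
representation `ε' : G' → GL(ℂᵏ)` satisfying the equivariance condition
`ρ(p'(g)y) = ε'(g)∘ρ(y)∘ε'(g)⁻¹` factors uniquely through `G`, i.e. there is a unique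
homomorphism `f : G' → G` with `p' = p ∘ f` and `ε' = ε ∘ f`. -/
theorem stmt_12 (n k : ℕ) (hk : k = 2 ^ (n / 2))
    (m : spinGroup (negEuclideanForm n))
    (hm : ((m : CliffordAlgebra (negEuclideanForm n))) = -1)
    (ρ : ComplexClifford n →ₐ[ℂ] Module.End ℂ (Fin k → ℂ))
    (hirr : ∀ W : Submodule ℂ (Fin k → ℂ),
      (∀ (a : ComplexClifford n), ∀ w ∈ W, ρ a w ∈ W) → W = ⊥ ∨ W = ⊤)
    (act : SOGroup n →* (ComplexClifford n ≃ₐ[ℂ] ComplexClifford n))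
    (hact : ∀ (B : SOGroup n) (v : Fin n → ℝ),
      act B (inclC n (ι (negEuclideanForm n) v))
        = inclC n (ι (negEuclideanForm n) ((SOGroup.matrix B).mulVec v)))
    (p : SpinC n m →* SOGroup n)
    (hp : ∀ (A : spinGroup (negEuclideanForm n)) (c : ℂˣ) (v : Fin n → ℝ),
      ι (negEuclideanForm n) ((SOGroup.matrix (p (QuotientGroup.mk (A, c)))).mulVec v)
        = (A : CliffordAlgebra (negEuclideanForm n)) * ι (negEuclideanForm n) v
            * ((A⁻¹ : spinGroup (negEuclideanForm n)) : CliffordAlgebra (negEuclideanForm n)))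
    (ε : SpinC n m →* (Module.End ℂ (Fin k → ℂ))ˣ)
    (hε : ∀ (A : spinGroup (negEuclideanForm n)) (c : ℂˣ),
      ((ε (QuotientGroup.mk (A, c)) : (Module.End ℂ (Fin k → ℂ))ˣ) : Module.End ℂ (Fin k → ℂ))
        = (c : ℂ) • ρ (inclC n (A : CliffordAlgebra (negEuclideanForm n))))
    (G' : Type) [Group G'] (p' : G' →* SOGroup n)
    (ε' : G' →* (Module.End ℂ (Fin k → ℂ))ˣ)
    (hequiv : ∀ (g : G') (y : ComplexClifford n),
      ρ (act (p' g) y) = ↑(ε' g) * ρ y * ↑(ε' g)⁻¹) :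
    ∃! f : G' →* SpinC n m, p' = p.comp f ∧ ε' = ε.comp f := by
  have : Nonempty (Fin k) := ⟨⟨0, hk ▸ Nat.two_pow_pos _⟩⟩
  exact stmt_12_general hm hirr hp hε fun g v ↦ by rw [← hact, hequiv]
end

section
/- Any continuous linear operator D on the Schwartz space S(ℝⁿ) that commutes with multiplication by xⱼ and with ∂/∂xⱼ for all j = 1,…,n is a complex scalar multiple of the identity. -/
/-!
An operator commuting with the coordinate multiplications is pointwise: if `f a = 0`, Hadamard's
lemma writes `f` as `∑ⱼ (xⱼ - aⱼ) hⱼ` with Schwartz `hⱼ`, so `D f` vanishes at `a` as well. Hence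
`D f x = T x (f x)` for linear maps `T x`. Applying `D` to functions that are constant near a point
shows that `x ↦ T x v` is smooth, and commutation with the derivatives makes its derivative vanish.
-/

open Set Topology
open scoped ContDiff SchwartzMap LineDeriv

section SegmentMoment

variable {E V : Type*} [NormedAddCommGroup E] [NormedSpace ℝ E]
  [NormedAddCommGroup V] [NormedSpace ℝ V]

/-- The `k`-th moment `∫₀¹ tᵏ F(a + t(x - a)) dt` of `F` along the segment from `a` to `x`. For
`k = 0` this is the mean of `F` over the segment, as in Hadamard's lemma; the higher moments appear
in its derivatives with respect to `x`. -/
noncomputable def segmentMoment (k : ℕ) (F : E → V) (a x : E) : V :=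
  ∫ t in (0 : ℝ)..1, t ^ k • F (AffineMap.lineMap a x t)

theorem continuous_pow_smul_comp_lineMap {F : E → V} (hF : Continuous F) (k : ℕ) (a x : E) :
    Continuous fun t : ℝ => t ^ k • F (AffineMap.lineMap a x t) :=
  (continuous_pow k).smul (hF.comp AffineMap.lineMap_continuous)

theorem norm_pow_smul_comp_lineMap_le {F : E → V} {C : ℝ} {N : ℕ}
    (hF : ∀ y, ‖F y‖ ≤ C * (1 + ‖y‖) ^ N) (k : ℕ) (a x : E) {t : ℝ} (ht : t ∈ Icc (0 : ℝ) 1) :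
    ‖t ^ k • F (AffineMap.lineMap a x t)‖ ≤ C * (1 + (‖a‖ + ‖x‖)) ^ N := by
  have hC : 0 ≤ C := by simpa using (norm_nonneg _).trans (hF 0)
  have hpow : ‖t ^ k‖ ≤ 1 := by
    rw [Real.norm_of_nonneg (pow_nonneg ht.1 k)]
    exact pow_le_one₀ ht.1 ht.2
  have hline : ‖AffineMap.lineMap a x t‖ ≤ ‖a‖ + ‖x‖ := by
    rw [AffineMap.lineMap_apply_module]
    refine (norm_add_le _ _).trans (add_le_add ?_ ?_)
    · rw [norm_smul, Real.norm_of_nonneg (sub_nonneg.2 ht.2)]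
      exact mul_le_of_le_one_left (norm_nonneg a) (sub_le_self 1 ht.1)
    · rw [norm_smul, Real.norm_of_nonneg ht.1]
      exact mul_le_of_le_one_left (norm_nonneg x) ht.2
  calc ‖t ^ k • F (AffineMap.lineMap a x t)‖
      ≤ 1 * ‖F (AffineMap.lineMap a x t)‖ := by rw [norm_smul]; gcongr
    _ ≤ C * (1 + ‖AffineMap.lineMap a x t‖) ^ N := by rw [one_mul]; exact hF _
    _ ≤ C * (1 + (‖a‖ + ‖x‖)) ^ N := by gcongr

theorem norm_segmentMoment_le {F : E → V} {C : ℝ} {N : ℕ}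
    (hF : ∀ y, ‖F y‖ ≤ C * (1 + ‖y‖) ^ N) (k : ℕ) (a x : E) :
    ‖segmentMoment k F a x‖ ≤ C * (1 + (‖a‖ + ‖x‖)) ^ N := by
  have hint : ∀ t ∈ uIoc (0 : ℝ) 1, ‖t ^ k • F (AffineMap.lineMap a x t)‖
      ≤ C * (1 + (‖a‖ + ‖x‖)) ^ N := fun t ht => by
    rw [uIoc_of_le zero_le_one] at ht
    exact norm_pow_smul_comp_lineMap_le hF k a x (Ioc_subset_Icc_self ht)
  simpa [segmentMoment] using intervalIntegral.norm_integral_le_of_norm_le_const hint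

theorem segmentMoment_linearIsometryEquiv_comp {W : Type*} [NormedAddCommGroup W]
    [NormedSpace ℝ W] (L : V ≃ₗᵢ[ℝ] W) (k : ℕ) (F : E → V) (a x : E) :
    segmentMoment k (L ∘ F) a x = L (segmentMoment k F a x) := by
  simp only [segmentMoment, intervalIntegral.integral_of_le zero_le_one, Function.comp_apply,
    ← map_smul]
  exact L.toContinuousLinearEquiv.integral_comp_comm _

theorem hasFDerivAt_pow_smul_comp_lineMap {F : E → V} (hF : Differentiable ℝ F) (k : ℕ) (a x : E)
    (t : ℝ) :
    HasFDerivAt (fun y => t ^ k • F (AffineMap.lineMap a y t))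
      (t ^ (k + 1) • fderiv ℝ F (AffineMap.lineMap a x t)) x := by
  have hline : HasFDerivAt (fun y : E => AffineMap.lineMap a y t)
      (t • ContinuousLinearMap.id ℝ E) x := by
    simp only [AffineMap.lineMap_apply_module']
    exact (((hasFDerivAt_id x).sub_const a).const_smul t).add_const a
  refine (((hF _).hasFDerivAt.comp x hline).const_smul (t ^ k)).congr_fderiv ?_
  rw [ContinuousLinearMap.comp_smul, ContinuousLinearMap.comp_id, smul_smul, pow_succ]

theorem hasFDerivAt_segmentMoment {F : E → V} (hF : ContDiff ℝ 1 F) {C : ℝ} {N : ℕ}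
    (hF' : ∀ y, ‖fderiv ℝ F y‖ ≤ C * (1 + ‖y‖) ^ N) (k : ℕ) (a x : E) :
    HasFDerivAt (segmentMoment k F a) (segmentMoment (k + 1) (fderiv ℝ F) a x) x := by
  have hC : 0 ≤ C := by simpa using (norm_nonneg _).trans (hF' 0)
  refine intervalIntegral.hasFDerivAt_integral_of_dominated_of_fderiv_le (𝕜 := ℝ)
    (F' := fun y t => t ^ (k + 1) • fderiv ℝ F (AffineMap.lineMap a y t))
    (bound := fun _ => C * (1 + (‖a‖ + (‖x‖ + 1))) ^ N) (Metric.ball_mem_nhds x one_pos)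
    (.of_forall fun y => ?meas) ?int ?meas' (.of_forall fun t ht y hy => ?bound)
    intervalIntegrable_const (.of_forall fun t _ y _ => ?diff)
  case meas => exact (continuous_pow_smul_comp_lineMap hF.continuous k a y).aestronglyMeasurable
  case int => exact (continuous_pow_smul_comp_lineMap hF.continuous k a x).intervalIntegrable _ _
  case meas' =>
    exact (continuous_pow_smul_comp_lineMap (hF.continuous_fderiv one_ne_zero)
      (k + 1) a x).aestronglyMeasurable
  case bound =>
    rw [uIoc_of_le zero_le_one] at ht
    have hy' : ‖y‖ ≤ ‖x‖ + 1 :=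
      (norm_le_norm_add_norm_sub' y x).trans (by gcongr; exact (mem_ball_iff_norm.1 hy).le)
    refine (norm_pow_smul_comp_lineMap_le hF' (k + 1) a y (Ioc_subset_Icc_self ht)).trans ?_
    gcongr
  case diff => exact hasFDerivAt_pow_smul_comp_lineMap (hF.differentiable one_ne_zero) k a y t

theorem hasFTaylorSeriesUpTo_segmentMoment {F : E → V} (hF : F.HasTemperateGrowth) (a : E) :
    HasFTaylorSeriesUpTo ∞ (segmentMoment 0 F a)
      (fun x k => segmentMoment k (iteratedFDeriv ℝ k F) a x) := by
  refine (hasFTaylorSeriesUpTo_top_iff' le_rfl).2 ⟨fun x => ?_, fun k x => ?_⟩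
  · rw [iteratedFDeriv_zero_eq_comp, segmentMoment_linearIsometryEquiv_comp]
    rfl
  · obtain ⟨N, C, hC⟩ := hF.2 (k + 1)
    have hsmooth : ContDiff ℝ 1 (iteratedFDeriv ℝ k F) :=
      hF.1.iteratedFDeriv_right (by exact_mod_cast le_top)
    have hderiv := hasFDerivAt_segmentMoment hsmooth
      (fun y => norm_fderiv_iteratedFDeriv.trans_le (hC y)) k a x
    rwa [fderiv_iteratedFDeriv, segmentMoment_linearIsometryEquiv_comp] at hderiv

theorem hasTemperateGrowth_segmentMoment {F : E → V} (hF : F.HasTemperateGrowth) (a : E) :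
    (segmentMoment 0 F a).HasTemperateGrowth := by
  have hseries := hasFTaylorSeriesUpTo_segmentMoment hF a
  refine ⟨hseries.contDiff, fun k => ?_⟩
  obtain ⟨N, C, hC⟩ := hF.2 k
  have hC₀ : 0 ≤ C := by simpa using (norm_nonneg _).trans (hC 0)
  refine ⟨N, C * (1 + ‖a‖) ^ N, fun x => ?_⟩
  rw [← hseries.eq_iteratedFDeriv (by exact_mod_cast le_top) x]
  calc ‖segmentMoment k (iteratedFDeriv ℝ k F) a x‖
      ≤ C * (1 + (‖a‖ + ‖x‖)) ^ N := norm_segmentMoment_le hC k a x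
    _ ≤ C * ((1 + ‖a‖) * (1 + ‖x‖)) ^ N := by
        gcongr
        nlinarith [mul_nonneg (norm_nonneg a) (norm_nonneg x)]
    _ = C * (1 + ‖a‖) ^ N * (1 + ‖x‖) ^ N := by rw [mul_pow, mul_assoc]

theorem sub_eq_segmentMoment_fderiv_apply [CompleteSpace V] {F : E → V} (hF : ContDiff ℝ 1 F)
    (a x : E) : F x - F a = segmentMoment 0 (fderiv ℝ F) a x (x - a) := by
  have hcont : Continuous fun t : ℝ => fderiv ℝ F (AffineMap.lineMap a x t) :=
    (hF.continuous_fderiv one_ne_zero).comp AffineMap.lineMap_continuous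
  have hderiv (t : ℝ) : HasDerivAt (fun t : ℝ => F (AffineMap.lineMap a x t))
      (fderiv ℝ F (AffineMap.lineMap a x t) (x - a)) t :=
    (hF.differentiable one_ne_zero _).hasFDerivAt.comp_hasDerivAt t AffineMap.hasDerivAt_lineMap
  have hftc := intervalIntegral.integral_eq_sub_of_hasDerivAt (a := 0) (b := 1)
    (fun t _ => hderiv t) ((hcont.clm_apply continuous_const).intervalIntegrable _ _)
  rw [AffineMap.lineMap_apply_one, AffineMap.lineMap_apply_zero] at hftc
  simp only [segmentMoment, pow_zero, one_smul]
  rw [← hftc, ContinuousLinearMap.intervalIntegral_apply (hcont.intervalIntegrable _ _)]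

end SegmentMoment

section SchwartzSpace

variable {ι E V : Type*} [NormedAddCommGroup E] [NormedSpace ℝ E]
  [NormedAddCommGroup V] [NormedSpace ℝ V]

theorem hasTemperateGrowth_coord [FiniteDimensional ℝ E] (b : Module.Basis ι ℝ E) (j : ι) :
    (b.coord j : E → ℝ).HasTemperateGrowth :=
  (LinearMap.toContinuousLinearMap (b.coord j)).hasTemperateGrowth

theorem exists_schwartzMap_eventuallyEq_const [FiniteDimensional ℝ E] (a : E) (v : V) :
    ∃ f : 𝓢(E, V), f =ᶠ[𝓝 a] fun _ => v := by
  let χ : ContDiffBump a := default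
  have hsupp : HasCompactSupport fun x => χ x • v := χ.hasCompactSupport.smul_right
  refine ⟨hsupp.toSchwartzMap (χ.contDiff.smul contDiff_const), ?_⟩
  filter_upwards [χ.eventuallyEq_one] with x hx
  simp [hx]

theorem exists_hasTemperateGrowth_sub_eq_sum_coord [Fintype ι] [CompleteSpace V]
    (b : Module.Basis ι ℝ E) (f : 𝓢(E, V)) (a : E) :
    ∃ q : ι → E → V, (∀ j, (q j).HasTemperateGrowth) ∧
      ∀ x, f x - f a = ∑ j, b.coord j (x - a) • q j x := by
  refine ⟨fun j x => segmentMoment 0 (fderiv ℝ f) a x (b j), fun j => ?_, fun x => ?_⟩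
  · exact (ContinuousLinearMap.apply ℝ V (b j)).hasTemperateGrowth.comp
      (hasTemperateGrowth_segmentMoment (SchwartzMap.fderivCLM ℝ E V f).hasTemperateGrowth a)
  · rw [sub_eq_segmentMoment_fderiv_apply (f.smooth 1)]
    conv_lhs => rw [← b.sum_repr (x - a)]
    simp [map_sum]

theorem exists_eq_sum_coord_sub_smul [Fintype ι] [CompleteSpace V] (b : Module.Basis ι ℝ E)
    {f : 𝓢(E, V)} {a : E} (hfa : f a = 0) :
    ∃ h : ι → 𝓢(E, V), f = ∑ j,
      (SchwartzMap.smulLeftCLM V (b.coord j) (h j) - b.coord j a • h j) := by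
  have : FiniteDimensional ℝ E := b.finiteDimensional_of_finite
  obtain ⟨χ, hχ⟩ := exists_schwartzMap_eventuallyEq_const a (1 : ℝ)
  obtain ⟨q, hq, hfq⟩ := exists_hasTemperateGrowth_sub_eq_sum_coord b f a
  obtain ⟨r, hr, hχr⟩ := exists_hasTemperateGrowth_sub_eq_sum_coord b χ a
  -- The Hadamard quotients `q j` of `f` need not decay at infinity, so they are cut off by `χ`.
  refine ⟨fun j => SchwartzMap.bilinLeftCLM (ContinuousLinearMap.lsmul ℝ ℝ) (hq j) χ
    - SchwartzMap.smulLeftCLM V (r j) f, ?_⟩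
  ext x
  have hsplit : f x = χ x • (f x - f a) - (χ x - χ a) • f x := by
    rw [hfa, hχ.self_of_nhds]
    module
  rw [hsplit, hfq, hχr, Finset.smul_sum, Finset.sum_smul, ← Finset.sum_sub_distrib, sum_apply]
  refine Finset.sum_congr rfl fun j _ => ?_
  simp only [map_sub, sub_apply, smul_apply,
    SchwartzMap.smulLeftCLM_apply_apply (hasTemperateGrowth_coord b j),
    SchwartzMap.smulLeftCLM_apply_apply (hr j), SchwartzMap.bilinLeftCLM_apply,
    ContinuousLinearMap.lsmul_apply, smul_eq_mul]
  module

end SchwartzSpace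

section Commutant

variable {ι E V W : Type*} [NormedAddCommGroup E] [NormedSpace ℝ E] [FiniteDimensional ℝ E]
  [NormedAddCommGroup V] [NormedSpace ℝ V] [NormedAddCommGroup W] [NormedSpace ℝ W]
  (b : Module.Basis ι ℝ E)

theorem apply_eq_zero_of_comm_coord [CompleteSpace V] (D : 𝓢(E, V) →ₗ[ℝ] 𝓢(E, W))
    (hD : ∀ j f, D (SchwartzMap.smulLeftCLM V (b.coord j) f) =
      SchwartzMap.smulLeftCLM W (b.coord j) (D f))
    {f : 𝓢(E, V)} {a : E} (hfa : f a = 0) : D f a = 0 := by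
  have := FiniteDimensional.fintypeBasisIndex b
  obtain ⟨h, rfl⟩ := exists_eq_sum_coord_sub_smul b hfa
  simp [hD, sum_apply, SchwartzMap.smulLeftCLM_apply_apply (hasTemperateGrowth_coord b _)]

theorem exists_linearMap_apply_eq_of_comm_coord {𝕜 : Type*} [RCLike 𝕜] [CompleteSpace V]
    [NormedSpace 𝕜 V] [IsScalarTower ℝ 𝕜 V] [NormedSpace 𝕜 W] [IsScalarTower ℝ 𝕜 W]
    (D : 𝓢(E, V) →ₗ[𝕜] 𝓢(E, W))
    (hD : ∀ j f, D (SchwartzMap.smulLeftCLM V (b.coord j) f) =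
      SchwartzMap.smulLeftCLM W (b.coord j) (D f)) (a : E) :
    ∃ T : V →ₗ[𝕜] W, ∀ f, D f a = T (f a) := by
  let eval : 𝓢(E, V) →ₗ[𝕜] V :=
    { toFun f := f a, map_add' _ _ := rfl, map_smul' _ _ := rfl }
  have hsurj : Function.Surjective eval := fun v =>
    (exists_schwartzMap_eventuallyEq_const a v).imp fun _ hf => hf.self_of_nhds
  obtain ⟨s, hs⟩ := eval.exists_rightInverse_of_surjective (LinearMap.range_eq_top.2 hsurj)
  let T : V →ₗ[𝕜] W :=
    { toFun v := D (s v) a, map_add' _ _ := by simp, map_smul' _ _ := by simp }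
  refine ⟨T, fun f => sub_eq_zero.1 ?_⟩
  have hvanish : (f - s (f a)) a = 0 := sub_eq_zero.2 (LinearMap.congr_fun hs (f a)).symm
  simpa [T] using apply_eq_zero_of_comm_coord b (D.restrictScalars ℝ) hD hvanish

theorem eq_of_comm_lineDeriv {R : Type*} [Semiring R] [Module R V] [Module R W]
    {D : 𝓢(E, V) → 𝓢(E, W)} {T : E → V →ₗ[R] W} (hT : ∀ f x, D f x = T x (f x))
    (hD : ∀ j f, D (∂_{b j} f) = ∂_{b j} (D f)) (x y : E) : T x = T y := by
  ext v
  have hderiv (a : E) : HasFDerivAt (fun z => T z v) (0 : E →L[ℝ] W) a := by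
    obtain ⟨f, hf⟩ := exists_schwartzMap_eventuallyEq_const a v
    have hloc : (fun z => T z v) =ᶠ[𝓝 a] D f := by
      filter_upwards [hf] with z hz
      rw [hT, hz]
    have hfderiv : fderiv ℝ (D f) a = 0 := by
      refine ContinuousLinearMap.coe_injective (b.ext fun j => ?_)
      calc fderiv ℝ (D f) a (b j) = T a (∂_{b j} f a) := by
            rw [← SchwartzMap.lineDerivOp_apply_eq_fderiv, ← hD, hT]
        _ = 0 := by simp [SchwartzMap.lineDerivOp_apply_eq_fderiv, hf.fderiv_eq]
    exact hfderiv ▸ ((D f).hasFDerivAt a).congr_of_eventuallyEq hloc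
  exact is_const_of_fderiv_eq_zero (𝕜 := ℝ) (fun a => (hderiv a).differentiableAt)
    (fun a => (hderiv a).fderiv) x y

end Commutant

theorem stmt_16_general {𝕜 ι E V W : Type*} [RCLike 𝕜]
    [NormedAddCommGroup E] [NormedSpace ℝ E] [FiniteDimensional ℝ E]
    [NormedAddCommGroup V] [NormedSpace ℝ V] [NormedSpace 𝕜 V] [IsScalarTower ℝ 𝕜 V]
    [CompleteSpace V]
    [NormedAddCommGroup W] [NormedSpace ℝ W] [NormedSpace 𝕜 W] [IsScalarTower ℝ 𝕜 W]
    (b : Module.Basis ι ℝ E) (D : 𝓢(E, V) →ₗ[𝕜] 𝓢(E, W))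
    (hDX : ∀ j f, D (SchwartzMap.smulLeftCLM V (b.coord j) f) =
      SchwartzMap.smulLeftCLM W (b.coord j) (D f))
    (hDP : ∀ j f, D (∂_{b j} f) = ∂_{b j} (D f)) :
    ∃ T : V →ₗ[𝕜] W, ∀ f x, D f x = T (f x) := by
  choose T hT using exists_linearMap_apply_eq_of_comm_coord b D hDX
  exact ⟨T 0, fun f x => by rw [hT, eq_of_comm_lineDeriv b (fun f x => hT x f) hDP x 0]⟩

theorem exists_forall_eq_smul_of_comm_coord_lineDeriv {𝕜 ι E : Type*} [RCLike 𝕜]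
    [NormedAddCommGroup E] [NormedSpace ℝ E] [FiniteDimensional ℝ E]
    (b : Module.Basis ι ℝ E) (D : 𝓢(E, 𝕜) →ₗ[𝕜] 𝓢(E, 𝕜))
    (hDX : ∀ j f, D (SchwartzMap.smulLeftCLM 𝕜 (b.coord j) f) =
      SchwartzMap.smulLeftCLM 𝕜 (b.coord j) (D f))
    (hDP : ∀ j f, D (∂_{b j} f) = ∂_{b j} (D f)) :
    ∃ c : 𝕜, ∀ f, D f = c • f := by
  obtain ⟨T, hT⟩ := stmt_16_general b D hDX hDP
  refine ⟨T 1, fun f => SchwartzMap.ext fun x => ?_⟩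
  calc D f x = T (f x • 1) := by rw [smul_eq_mul, mul_one, hT]
    _ = (T 1 • f) x := by rw [map_smul, smul_apply, smul_eq_mul, smul_eq_mul, mul_comm]

/-- Schur-type lemma for the Schrödinger representation: any continuous linear operator
`D` on the Schwartz space `S(ℝⁿ)` commuting with multiplication by `xⱼ` and with
`∂/∂xⱼ` for all `j` is a complex scalar multiple of the identity. -/
theorem stmt_16 (n : ℕ)
    (X P : Fin n →
      (SchwartzMap (EuclideanSpace ℝ (Fin n)) ℂ →L[ℂ] SchwartzMap (EuclideanSpace ℝ (Fin n)) ℂ))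
    (hX : ∀ (j : Fin n) (f : SchwartzMap (EuclideanSpace ℝ (Fin n)) ℂ)
      (x : EuclideanSpace ℝ (Fin n)), X j f x = (x j : ℂ) * f x)
    (hP : ∀ (j : Fin n) (f : SchwartzMap (EuclideanSpace ℝ (Fin n)) ℂ)
      (x : EuclideanSpace ℝ (Fin n)), P j f x = fderiv ℝ f x (EuclideanSpace.single j 1))
    (D : SchwartzMap (EuclideanSpace ℝ (Fin n)) ℂ →L[ℂ] SchwartzMap (EuclideanSpace ℝ (Fin n)) ℂ)
    (hDX : ∀ j : Fin n, ∀ f, D (X j f) = X j (D f))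
    (hDP : ∀ j : Fin n, ∀ f, D (P j f) = P j (D f)) :
    ∃ c : ℂ, ∀ f : SchwartzMap (EuclideanSpace ℝ (Fin n)) ℂ, D f = c • f := by
  let b := (EuclideanSpace.basisFun (Fin n) ℝ).toBasis
  have hX' (j : Fin n) (f) : X j f = SchwartzMap.smulLeftCLM ℂ (b.coord j) f := by
    ext x
    simp [hX, b, SchwartzMap.smulLeftCLM_apply_apply (hasTemperateGrowth_coord b j)]
  have hP' (j : Fin n) (f) : P j f = ∂_{b j} f := by
    ext x
    simp [hP, b, SchwartzMap.lineDerivOp_apply_eq_fderiv]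
  exact exists_forall_eq_smul_of_comm_coord_lineDeriv b D.toLinearMap
    (by simpa [hX'] using hDX) (by simpa [hP'] using hDP)
end
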